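/- Let V be a set and v : [μ] → V a sequence, let π₀ be the identity permutation of [μ], and let 𝓔 = { {x,y} : x ≠ y, v_x = v_y and x ≡ y (mod 2) } (the components of ([μ],𝓔) are cliques by transitivity). Then for every r ∈ ℕ, π_r^{-1}(𝓔) = { {x,y} : x ≠ y, v_{π_r(x)} = v_{π_r(y)} and x ≡ y (mod 2) }. -/

import Mathlib

/-!
Call `[a, b]` a block of a coloring if the positions `a⁺, …, (b-1)⁺` are red while `a⁻` and `b⁺` are
green. The blocks partition `[μ]`, and `aVal k`, `bVal k` are the endpoints of the block containing
`k`, so that `k ↦ aVal k + bVal k - k` reverses every block.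

The proof shows by induction on `r` that `π_r` is an injective self-map of `[μ]` that preserves
parity, and that the endpoints of every block have equal parity (`Inv`). If `T` acts with indices
`i` and `j`, then `{π i, π j} ∈ 𝓔` and parity preservation give `i ≡ j (mod 2)`. As `[a, i]` and
`[j, b]` are blocks, `a ≡ b (mod 2)`, so both the reversal of `[a, b]` and the reversals of the blocks
inside it preserve parity. The only new block is `[a, b]`, whence the invariant persists
(`Inv.step`). Given the invariant, `E (π x) (π y)` unfolds to the claimed condition.
-/

attribute [local instance] Classical.propDecidable

inductive Col where
  | green : Col
  | red : Col
deriving DecidableEq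

namespace TOp

/-- The color of position `k⁺`; positions outside `{lo⁺, …, (hi−1)⁺}` count as green. -/
def fpos (lo hi : ℕ) (f : ℕ → Col) (k : ℕ) : Col :=
  if lo ≤ k ∧ k + 1 ≤ hi then f k else Col.green

/-- `j` is a candidate value for `j_{(π,f)}` : there is `i < j` with
`f(i⁺) = f(j⁻) = green` and `{i,j} ∈ π⁻¹(𝓔)`. -/
def jSpec (lo hi : ℕ) (E : ℕ → ℕ → Prop) (π : ℕ → ℕ) (f : ℕ → Col) (j : ℕ) : Prop :=
  lo ≤ j ∧ j ≤ hi ∧ ∃ i, lo ≤ i ∧ i < j ∧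
    fpos lo hi f i = Col.green ∧ fpos lo hi f (j - 1) = Col.green ∧ E (π i) (π j)

/-- `(π,f)` is not a fixed point of `T`, i.e. `j_{(π,f)} < +∞`. -/
def hasJ (lo hi : ℕ) (E : ℕ → ℕ → Prop) (π : ℕ → ℕ) (f : ℕ → Col) : Prop :=
  ∃ j, jSpec lo hi E π f j

/-- `j_{(π,f)}` (junk value if no candidate exists). -/
noncomputable def jVal (lo hi : ℕ) (E : ℕ → ℕ → Prop) (π : ℕ → ℕ) (f : ℕ → Col) : ℕ :=
  sInf {j | jSpec lo hi E π f j}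

/-- `i_{(π,f)}`. -/
noncomputable def iVal (lo hi : ℕ) (E : ℕ → ℕ → Prop) (π : ℕ → ℕ) (f : ℕ → Col) : ℕ :=
  sSup {i | lo ≤ i ∧ i < jVal lo hi E π f ∧ fpos lo hi f i = Col.green ∧
    E (π i) (π (jVal lo hi E π f))}

/-- `a_{(π,f)}(k)`. -/
noncomputable def aVal (lo hi : ℕ) (f : ℕ → Col) (k : ℕ) : ℕ :=
  if fpos lo hi f (k - 1) = Col.green then k
  else sInf {i' | i' ≤ k ∧ ∀ i'', i' ≤ i'' → i'' < k → fpos lo hi f i'' = Col.red}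

/-- `b_{(π,f)}(k)`. -/
noncomputable def bVal (lo hi : ℕ) (f : ℕ → Col) (k : ℕ) : ℕ :=
  if fpos lo hi f k = Col.green then k
  else sSup {j' | k ≤ j' ∧ ∀ j'', k < j'' → j'' ≤ j' → fpos lo hi f (j'' - 1) = Col.red}

/-- The operator `T` on states `(π, f)`. -/
noncomputable def Tstep (lo hi : ℕ) (E : ℕ → ℕ → Prop)
    (s : (ℕ → ℕ) × (ℕ → Col)) : (ℕ → ℕ) × (ℕ → Col) :=
  if hasJ lo hi E s.1 s.2 then
    let a := aVal lo hi s.2 (iVal lo hi E s.1 s.2)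
    let b := bVal lo hi s.2 (jVal lo hi E s.1 s.2)
    (fun k => if a ≤ k ∧ k ≤ b then
        s.1 (aVal lo hi s.2 (a + b - k) + bVal lo hi s.2 (a + b - k) - (a + b - k))
      else s.1 k,
     fun k => if a ≤ k ∧ k < b then Col.red else s.2 k)
  else s

/-- `(π_r, f_r) = T^r(π₀, 𝐠𝐫𝐞𝐞𝐧)`. -/
noncomputable def TIter (lo hi : ℕ) (E : ℕ → ℕ → Prop) (π₀ : ℕ → ℕ) (r : ℕ) :
    (ℕ → ℕ) × (ℕ → Col) :=
  (Tstep lo hi E)^[r] (π₀, fun _ => Col.green)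

/-- `j_{(π,f)}` as an extended natural number (`⊤` encodes `+∞`). -/
noncomputable def jE (lo hi : ℕ) (E : ℕ → ℕ → Prop) (π : ℕ → ℕ) (f : ℕ → Col) : ℕ∞ :=
  if hasJ lo hi E π f then (jVal lo hi E π f : ℕ∞) else ⊤

end TOp

namespace TOp

/-- `[a, b]` is a block of the coloring `f`: a maximal interval of `[μ]` whose inner positions
`a⁺, …, (b-1)⁺` are all red. -/
def Blk (μ : ℕ) (f : ℕ → Col) (a b : ℕ) : Prop :=
  1 ≤ a ∧ a ≤ b ∧ b ≤ μ ∧ fpos 1 μ f (a - 1) = Col.green ∧ fpos 1 μ f b = Col.green ∧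
    ∀ i, a ≤ i → i < b → fpos 1 μ f i = Col.red

lemma fpos_zero (μ : ℕ) (f : ℕ → Col) : fpos 1 μ f 0 = Col.green := by simp [fpos]

lemma fpos_of_le {μ k : ℕ} (f : ℕ → Col) (h : μ ≤ k) : fpos 1 μ f k = Col.green := by
  simp only [fpos]; rw [if_neg]; omega

lemma red_of_ne {c : Col} (h : c ≠ Col.green) : c = Col.red := by
  cases c <;> simp_all

lemma aVal_spec {μ k : ℕ} (f : ℕ → Col) (hk : 1 ≤ k) :
    1 ≤ aVal 1 μ f k ∧ aVal 1 μ f k ≤ k ∧ fpos 1 μ f (aVal 1 μ f k - 1) = Col.green ∧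
      ∀ i, aVal 1 μ f k ≤ i → i < k → fpos 1 μ f i = Col.red := by
  unfold aVal
  split_ifs with h
  · exact ⟨hk, le_rfl, h, fun i _ _ => by omega⟩
  · set S := {i' | i' ≤ k ∧ ∀ i'', i' ≤ i'' → i'' < k → fpos 1 μ f i'' = Col.red} with hS
    have hmem : sInf S ∈ S := Nat.sInf_mem ⟨k, le_rfl, fun i _ _ => by omega⟩
    obtain ⟨h1, h2⟩ := hmem
    have h0 : 1 ≤ sInf S := by
      by_contra h0
      have := h2 0 (by omega) (by omega)
      rw [fpos_zero] at this
      cases this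
    refine ⟨h0, h1, ?_, h2⟩
    by_contra hg
    have : sInf S - 1 ∈ S := by
      refine ⟨by omega, fun i hi hik => ?_⟩
      rcases Nat.lt_or_ge i (sInf S) with h3 | h3
      · rw [show i = sInf S - 1 by omega]
        exact red_of_ne hg
      · exact h2 i h3 hik
    have := Nat.sInf_le this
    omega

lemma bVal_spec {μ k : ℕ} (f : ℕ → Col) (hk : k ≤ μ) :
    k ≤ bVal 1 μ f k ∧ bVal 1 μ f k ≤ μ ∧ fpos 1 μ f (bVal 1 μ f k) = Col.green ∧
      ∀ i, k ≤ i → i < bVal 1 μ f k → fpos 1 μ f i = Col.red := by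
  unfold bVal
  split_ifs with h
  · exact ⟨le_rfl, hk, h, fun i _ _ => by omega⟩
  · set S := {j' | k ≤ j' ∧ ∀ j'', k < j'' → j'' ≤ j' → fpos 1 μ f (j'' - 1) = Col.red} with hS
    have hbd : ∀ j ∈ S, j ≤ μ := by
      rintro j ⟨_, h2⟩
      by_contra hj
      have := h2 (μ + 1) (by omega) (by omega)
      rw [fpos_of_le f (by omega)] at this
      cases this
    have hbdd : BddAbove S := ⟨μ, hbd⟩
    have hmem : sSup S ∈ S := Nat.sSup_mem ⟨k, le_rfl, fun i _ _ => by omega⟩ hbdd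
    have h3 := hbd _ hmem
    obtain ⟨h1, h2⟩ := hmem
    refine ⟨h1, h3, ?_, fun i hi hib => h2 (i + 1) (by omega) (by omega)⟩
    by_contra hg
    have : sSup S + 1 ∈ S := by
      refine ⟨by omega, fun i hi hik => ?_⟩
      rcases Nat.lt_or_ge (sSup S) i with h4 | h4
      · rw [show i - 1 = sSup S by omega]
        exact red_of_ne hg
      · exact h2 i hi h4
    have := le_csSup hbdd this
    omega

lemma blk_val {μ k : ℕ} (f : ℕ → Col) (h1 : 1 ≤ k) (h2 : k ≤ μ) :
    Blk μ f (aVal 1 μ f k) (bVal 1 μ f k) ∧ aVal 1 μ f k ≤ k ∧ k ≤ bVal 1 μ f k := by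
  obtain ⟨a1, a2, a3, a4⟩ := aVal_spec (μ := μ) f h1
  obtain ⟨b1, b2, b3, b4⟩ := bVal_spec (μ := μ) f h2
  refine ⟨⟨a1, by omega, b2, a3, b3, fun i hi hib => ?_⟩, a2, b1⟩
  rcases Nat.lt_or_ge i k with h | h
  · exact a4 i hi h
  · exact b4 i h hib

/-- A block cannot extend across a green position. -/
lemma Blk.not_green {μ a b c : ℕ} {f : ℕ → Col} (h : Blk μ f a b)
    (hc : fpos 1 μ f c = Col.green) (h1 : a ≤ c) : b ≤ c := by
  by_contra hlt
  have := h.2.2.2.2.2 c h1 (by omega)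
  rw [hc] at this
  cases this

/-- Two blocks sharing an element coincide. -/
lemma Blk.unique {μ a b c d p : ℕ} {f : ℕ → Col} (h : Blk μ f a b) (h' : Blk μ f c d)
    (hap : a ≤ p) (hpb : p ≤ b) (hcp : c ≤ p) (hpd : p ≤ d) : a = c ∧ b = d := by
  have e1 := h.not_green h'.2.2.2.2.1 (by omega)
  have e2 := h'.not_green h.2.2.2.2.1 (by omega)
  have e3 : a ≤ c := by
    by_contra hlt
    have := h'.not_green h.2.2.2.1 (by omega)
    have := h.1
    omega
  have e4 : c ≤ a := by
    by_contra hlt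
    have := h.not_green h'.2.2.2.1 (by omega)
    have := h'.1
    omega
  omega

/-- The map `k ↦ ←k` reversing each block is injective. -/
lemma rev_inj {μ m n : ℕ} (f : ℕ → Col) (hm1 : 1 ≤ m) (hm2 : m ≤ μ) (hn1 : 1 ≤ n) (hn2 : n ≤ μ)
    (h : aVal 1 μ f m + bVal 1 μ f m - m = aVal 1 μ f n + bVal 1 μ f n - n) : m = n := by
  obtain ⟨hm, m1, m2⟩ := blk_val f hm1 hm2
  obtain ⟨hn, n1, n2⟩ := blk_val f hn1 hn2
  have := hm.unique hn (p := aVal 1 μ f m + bVal 1 μ f m - m)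
    (by omega) (by omega) (by omega) (by omega)
  omega

/-- The invariant of the iteration: `π` is an injective, parity preserving self-map of `[μ]`, and the
endpoints of every block have equal parity. -/
structure Inv (μ : ℕ) (s : (ℕ → ℕ) × (ℕ → Col)) : Prop where
  maps : ∀ k, 1 ≤ k → k ≤ μ → 1 ≤ s.1 k ∧ s.1 k ≤ μ ∧ s.1 k % 2 = k % 2
  inj : ∀ k l, 1 ≤ k → k ≤ μ → 1 ≤ l → l ≤ μ → s.1 k = s.1 l → k = l
  par : ∀ a b, Blk μ s.2 a b → a % 2 = b % 2

lemma Inv.init (μ : ℕ) : Inv μ (fun n => n, fun _ => Col.green) where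
  maps := fun k h1 h2 => ⟨h1, h2, rfl⟩
  inj := fun k l _ _ _ _ h => h
  par := fun a b h => by
    have := h.not_green (c := a) (by simp [fpos]) le_rfl
    have := h.2.1
    rw [show a = b by omega]

/-- The indices `j` and `i` chosen by `T` have the properties in their definition. -/
lemma ij_spec {μ : ℕ} {E : ℕ → ℕ → Prop} {π : ℕ → ℕ} {f : ℕ → Col} (h : hasJ 1 μ E π f) :
    1 ≤ iVal 1 μ E π f ∧ iVal 1 μ E π f < jVal 1 μ E π f ∧ jVal 1 μ E π f ≤ μ ∧
      fpos 1 μ f (iVal 1 μ E π f) = Col.green ∧ fpos 1 μ f (jVal 1 μ E π f - 1) = Col.green ∧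
      E (π (iVal 1 μ E π f)) (π (jVal 1 μ E π f)) := by
  have hj : jSpec 1 μ E π f (jVal 1 μ E π f) := Nat.sInf_mem h
  obtain ⟨_, h2, i, h3, h4, h5, h6, h7⟩ := hj
  have hi : iVal 1 μ E π f ∈ {i | 1 ≤ i ∧ i < jVal 1 μ E π f ∧ fpos 1 μ f i = Col.green ∧
      E (π i) (π (jVal 1 μ E π f))} :=
    Nat.sSup_mem ⟨i, h3, h4, h5, h7⟩ ⟨jVal 1 μ E π f, fun _ hk => hk.2.1.le⟩
  exact ⟨hi.1, hi.2.1, h2, hi.2.2.1, h6, hi.2.2.2⟩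

/-- Coloring the interval `[a, b]` between two green positions red creates the block `[a, b]` and
leaves the blocks outside it unchanged. -/
lemma Blk.of_recolor {μ a b c d : ℕ} {f : ℕ → Col} (ha : 1 ≤ a) (hbμ : b ≤ μ)
    (hga : fpos 1 μ f (a - 1) = Col.green) (hgb : fpos 1 μ f b = Col.green)
    (h : Blk μ (fun k => if a ≤ k ∧ k < b then Col.red else f k) c d) :
    (c = a ∧ d = b) ∨ Blk μ f c d := by
  set f' : ℕ → Col := fun k => if a ≤ k ∧ k < b then Col.red else f k with hf'
  have hin : ∀ k, a ≤ k → k < b → fpos 1 μ f' k = Col.red := fun k h1 h2 => by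
    simp only [fpos, hf']
    rw [if_pos (by omega), if_pos ⟨h1, h2⟩]
  have hout : ∀ k, ¬ (a ≤ k ∧ k < b) → fpos 1 μ f' k = fpos 1 μ f k := fun k hk => by
    simp only [fpos, hf', if_neg hk]
  have hgreen : ∀ k, fpos 1 μ f' k = Col.green → ¬ (a ≤ k ∧ k < b) := fun k hk hkab => by
    rw [hin k hkab.1 hkab.2] at hk
    cases hk
  have hga' : fpos 1 μ f' (a - 1) = Col.green := by rw [hout _ (by omega), hga]
  have hgb' : fpos 1 μ f' b = Col.green := by rw [hout _ (by omega), hgb]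
  have k1 : c ≤ a - 1 → d ≤ a - 1 := h.not_green hga'
  have k2 : c ≤ b → d ≤ b := h.not_green hgb'
  obtain ⟨h1, h2, h3, h4, h5, h6⟩ := h
  have n1 := hgreen _ h4
  have n2 := hgreen _ h5
  by_cases hc : c = a ∧ d = b
  · exact Or.inl hc
  · refine Or.inr ⟨h1, h2, h3, ?_, ?_, fun i hi hid => ?_⟩
    · rw [← hout _ n1, h4]
    · rw [← hout _ n2, h5]
    · rw [← hout _ (by omega), h6 i hi hid]

lemma Inv.step {μ : ℕ} {E : ℕ → ℕ → Prop} (hE : ∀ x y, E x y → x % 2 = y % 2)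
    {s : (ℕ → ℕ) × (ℕ → Col)} (hs : Inv μ s) : Inv μ (Tstep 1 μ E s) := by
  unfold Tstep
  split_ifs with hJ
  swap
  · exact hs
  obtain ⟨i1, hij, jμ, gi, gj, hEij⟩ := ij_spec hJ
  set i := iVal 1 μ E s.1 s.2
  set j := jVal 1 μ E s.1 s.2
  obtain ⟨Bi, ai, -⟩ := blk_val (μ := μ) s.2 i1 (by omega)
  obtain ⟨Bj, -, jb⟩ := blk_val (μ := μ) s.2 (show 1 ≤ j by omega) jμ
  -- `i⁺` and `j⁻` are green, so `i` ends its block and `j` begins its block.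
  have ebi : bVal 1 μ s.2 i = i := if_pos gi
  have eaj : aVal 1 μ s.2 j = j := if_pos gj
  rw [ebi] at Bi
  rw [eaj] at Bj
  have hpar : aVal 1 μ s.2 i % 2 = bVal 1 μ s.2 j % 2 := by
    have p1 := hs.par _ _ Bi
    have p2 := hs.par _ _ Bj
    have p3 := hE _ _ hEij
    have p4 := (hs.maps i i1 (by omega)).2.2
    have p5 := (hs.maps j (by omega) jμ).2.2
    omega
  obtain ⟨a1, -, -, ga, -, -⟩ := Bi
  obtain ⟨-, -, bμ, -, gb, -⟩ := Bj
  generalize aVal 1 μ s.2 i = a at *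
  generalize bVal 1 μ s.2 j = b at *
  -- Reversal of the blocks inside `[a, b]` stays in `[a, b]` and preserves parity.
  have hrev : ∀ m, a ≤ m → m ≤ b →
      a ≤ aVal 1 μ s.2 m + bVal 1 μ s.2 m - m ∧ aVal 1 μ s.2 m + bVal 1 μ s.2 m - m ≤ b ∧
      (aVal 1 μ s.2 m + bVal 1 μ s.2 m - m) % 2 = m % 2 := by
    intro m h1 h2
    obtain ⟨Bm, m1, m2⟩ := blk_val (μ := μ) s.2 (show 1 ≤ m by omega) (by omega)
    have p := hs.par _ _ Bm
    have q1 := Bm.not_green gb (by omega)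
    have q2 : a ≤ aVal 1 μ s.2 m := by
      by_contra hlt
      have := Bm.not_green ga (by omega)
      omega
    omega
  refine ⟨fun k k1 k2 => ?_, fun k l k1 k2 l1 l2 hkl => ?_, fun c d hcd => ?_⟩
  · dsimp only
    split_ifs with hk
    · have r := hrev (a + b - k) (by omega) (by omega)
      have m := hs.maps _ (show 1 ≤ aVal 1 μ s.2 (a + b - k) + bVal 1 μ s.2 (a + b - k)
        - (a + b - k) by omega) (by omega)
      omega
    · exact hs.maps k k1 k2
  · dsimp only at hkl
    split_ifs at hkl with hk hl hl
    · have r := hrev (a + b - k) (by omega) (by omega)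
      have r' := hrev (a + b - l) (by omega) (by omega)
      have e := hs.inj _ _ (by omega) (by omega) (by omega) (by omega) hkl
      have := rev_inj s.2 (by omega) (by omega) (by omega) (by omega) e
      omega
    · have r := hrev (a + b - k) (by omega) (by omega)
      have e := hs.inj _ _ (by omega) (by omega) l1 l2 hkl
      omega
    · have r := hrev (a + b - l) (by omega) (by omega)
      have e := hs.inj _ _ k1 k2 (by omega) (by omega) hkl
      omega
    · exact hs.inj _ _ k1 k2 l1 l2 hkl
  · rcases Blk.of_recolor a1 bμ ga gb hcd with ⟨rfl, rfl⟩ | h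
    · exact hpar
    · exact hs.par _ _ h

lemma Inv.iter {μ : ℕ} {E : ℕ → ℕ → Prop} (hE : ∀ x y, E x y → x % 2 = y % 2) (r : ℕ) :
    Inv μ (TIter 1 μ E (fun n => n) r) := by
  unfold TIter
  induction r with
  | zero => exact Inv.init μ
  | succ r ih =>
    rw [Function.iterate_succ_apply']
    exact ih.step hE

end TOp

open TOp in
/-- Let `v : [μ] → V` be a sequence, `π₀ = id`, and let
`𝓔 = {{x,y} : x ≠ y, v_x = v_y, x ≡ y (mod 2)}` (restricted to `[μ]`).  Then for every
`r`, `π_r⁻¹(𝓔) = {{x,y} : x ≠ y, v_{π_r(x)} = v_{π_r(y)}, x ≡ y (mod 2)}`. -/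
theorem stmt13 {V : Type*} (μ : ℕ) (hμ : 2 ≤ μ) (v : ℕ → V)
    (E : ℕ → ℕ → Prop)
    (hE : ∀ x y, E x y ↔ (x ≠ y ∧ 1 ≤ x ∧ x ≤ μ ∧ 1 ≤ y ∧ y ≤ μ ∧
      v x = v y ∧ x % 2 = y % 2))
    (r x y : ℕ) (hx1 : 1 ≤ x) (hx2 : x ≤ μ) (hy1 : 1 ≤ y) (hy2 : y ≤ μ) :
    (E ((TIter 1 μ E (fun n => n) r).1 x) ((TIter 1 μ E (fun n => n) r).1 y) ↔
      (x ≠ y ∧ v ((TIter 1 μ E (fun n => n) r).1 x) = v ((TIter 1 μ E (fun n => n) r).1 y) ∧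
        x % 2 = y % 2)) := by
  have hI := Inv.iter (μ := μ) (fun x y h => ((hE x y).1 h).2.2.2.2.2.2) r
  obtain ⟨x3, x4, x5⟩ := hI.maps x hx1 hx2
  obtain ⟨y3, y4, y5⟩ := hI.maps y hy1 hy2
  rw [hE, x5, y5]
  constructor
  · rintro ⟨h1, -, -, -, -, h2, h3⟩
    exact ⟨fun h => h1 (by rw [h]), h2, h3⟩
  · rintro ⟨h1, h2, h3⟩
    exact ⟨fun h => h1 (hI.inj x y hx1 hx2 hy1 hy2 h), x3, x4, y3, y4, h2, h3⟩
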